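/- Let a, b, c be pairwise distinct elements of ℂ ∖ {0,1}. Let A = ℂ[x,y,z₁,z₂]/(y³ − x(x−1)(x−a)(x−b)(x−c), 1 + z₁³ + z₂³) be the coordinate ring of the product C × F₀ of the affine curve C: y³ = x(x−1)(x−a)(x−b)(x−c) (an affine model of the cyclic triple cover of ℙ¹ branched along {0,1,∞,a,b,c}) and the affine Fermat cubic F₀: 1 + z₁³ + z₂³ = 0, let K = Frac(A), and let σ be the order-3 ℂ-algebra automorphism of K with σ(y) = ω·y, σ(z₁) = ω²·z₁, σ(z₂) = ω²·z₂ (fixing x) — the diagonal G = ℤ/3ℤ action. Further let ρ be the order-3 automorphism of K with ρ(y) = ω·y (fixing x, z₁, z₂), which preserves the fixed field L = K^σ. Then there is a ℂ-algebra isomorphism φ from the function field of the affine surface W₀: y₁³ + y₂³ + x(x−1)(x−a)(x−b)(x−c) = 0 (an affine model of Rohde's surface W in ℙ(2,2,1,1)) onto L such that φ intertwines the order-3 automorphism (y₁,y₂) ↦ (ω·y₁, ω·y₂) of Frac(W₀) with the restriction of ρ to L; an isomorphism is induced by y₁ ↦ z₁·y, y₂ ↦ z₂·y (with x unchanged). In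 other words, W is G-birationally equivalent to the quotient (C × F)/G. -/

import Mathlib

/-!
Formalization conventions.

* The function field of an affine variety whose coordinate ring `ℂ[x₁,…,xₙ]/I` is an
  integral domain is formalized as `FractionRing` of that coordinate ring (for the total
  rings of fractions of the rings appearing here this is the function field).
* Two such varieties are birationally equivalent iff their function fields are
  isomorphic as `ℂ`-algebras.
-/

noncomputable section
open MvPolynomial

/-- `ω = exp(2πi/3) ∈ ℂ`, a fixed primitive cube root of unity. -/
def ω : ℂ := Complex.exp (2 * Real.pi * Complex.I / 3)

/-- Coordinate ring of the affine hypersurface `f = 0` in `ℂⁿ`. -/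
abbrev HSurf {n : ℕ} (f : MvPolynomial (Fin n) ℂ) : Type :=
  MvPolynomial (Fin n) ℂ ⧸ Ideal.span {f}

/-- Coordinate ring of the affine variety `f = g = 0` in `ℂⁿ`. -/
abbrev HSurf2 {n : ℕ} (f g : MvPolynomial (Fin n) ℂ) : Type :=
  MvPolynomial (Fin n) ℂ ⧸ Ideal.span {f, g}

/-- The image of a polynomial `p` in the function field of the hypersurface `f = 0`. -/
def cls {n : ℕ} (f : MvPolynomial (Fin n) ℂ) (p : MvPolynomial (Fin n) ℂ) :
    FractionRing (HSurf f) :=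
  algebraMap (HSurf f) (FractionRing (HSurf f)) (Ideal.Quotient.mk _ p)

/-- The image of a polynomial `p` in the function field of the variety `f = g = 0`. -/
def cls2 {n : ℕ} (f g : MvPolynomial (Fin n) ℂ) (p : MvPolynomial (Fin n) ℂ) :
    FractionRing (HSurf2 f g) :=
  algebraMap (HSurf2 f g) (FractionRing (HSurf2 f g)) (Ideal.Quotient.mk _ p)

/-- `x(x−1)(x−a)(x−b)(x−c)` in the coordinates of `C × F₀`
(`x = X 0`, `y = X 1`, `z₁ = X 2`, `z₂ = X 3`). -/
def q4 (a b c : ℂ) : MvPolynomial (Fin 4) ℂ :=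
  X 0 * (X 0 - 1) * (X 0 - C a) * (X 0 - C b) * (X 0 - C c)

/-- Defining polynomial of the curve `C : y³ = x(x−1)(x−a)(x−b)(x−c)`, as an equation
in `ℂ⁴` (an affine model of the cyclic triple cover of `ℙ¹` branched along
`{0, 1, ∞, a, b, c}`). -/
def pC (a b c : ℂ) : MvPolynomial (Fin 4) ℂ := X 1 ^ 3 - q4 a b c

/-- Defining polynomial of the affine Fermat cubic `F₀ : 1 + z₁³ + z₂³ = 0`, as an
equation in `ℂ⁴`. -/
def pF₀4 : MvPolynomial (Fin 4) ℂ := 1 + X 2 ^ 3 + X 3 ^ 3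

/-- `x(x−1)(x−a)(x−b)(x−c)` in the coordinates of `W₀` (`x = X 0`, `y₁ = X 1`, `y₂ = X 2`). -/
def q3 (a b c : ℂ) : MvPolynomial (Fin 3) ℂ :=
  X 0 * (X 0 - 1) * (X 0 - C a) * (X 0 - C b) * (X 0 - C c)

/-- Defining polynomial of the affine surface `W₀ : y₁³ + y₂³ + x(x−1)(x−a)(x−b)(x−c) = 0`
(an affine model of Rohde's surface `W ⊂ ℙ(2,2,1,1)`). -/
def pW₀ (a b c : ℂ) : MvPolynomial (Fin 3) ℂ := X 1 ^ 3 + X 2 ^ 3 + q3 a b c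

/-!
The equations make sense for every prime `p`, every field containing a primitive `p`-th root of
unity and every polynomial `q(x)` of degree prime to `p` in place of `p = 3`, `ℂ` and the quintic.
The map `(x, y, z₁, z₂) ↦ (x, z₁y, z₂y)` is dominant: a geometric point of the surface with
`q(x) ≠ 0` lifts after choosing `y` with `y ^ p = q(x)`, by `zᵢ = yᵢ / y`. So the function field of
the surface embeds into `K`, with image `E` consisting of `σ`-invariants. Since `K = E(y)` and
`y ^ p = q(x) ∈ E`, we have `[K : E] ≤ p = [K : K^σ]`, and therefore `E = K^σ`. Both varieties are
irreducible because neither a polynomial of degree prime to `p` nor the squarefree polynomial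
`1 + z ^ p` is a `p`-th power up to a constant.
-/

open scoped Polynomial IntermediateField

section Kummer

variable {k K : Type*} [Field k] [Field K] [Algebra k K] {σ : K ≃ₐ[k] K}

theorem mem_fixedField_zpowers {x : K} :
    x ∈ IntermediateField.fixedField (Subgroup.zpowers σ) ↔ σ x = x := by
  refine ⟨fun h ↦ h ⟨σ, Subgroup.mem_zpowers σ⟩, fun h ⟨τ, hτ⟩ ↦ ?_⟩
  exact (Subgroup.zpowers_le (H := MulAction.stabilizer (K ≃ₐ[k] K) x)).2 h hτ

-- `[K : E] ≤ orderOf σ = [K : K^σ]`, since `y` is a root of `X ^ orderOf σ - y ^ orderOf σ`.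
theorem eq_fixedField_zpowers_of_adjoin_simple_eq_top (hσ : IsOfFinOrder σ)
    {E : IntermediateField k K} (hE : E ≤ IntermediateField.fixedField (Subgroup.zpowers σ))
    {y : K} (hy : y ^ orderOf σ ∈ E) (htop : E⟮y⟯ = ⊤) :
    E = IntermediateField.fixedField (Subgroup.zpowers σ) := by
  let P : E[X] := .X ^ orderOf σ - .C ⟨_, hy⟩
  have hP : P.Monic := Polynomial.monic_X_pow_sub_C _ hσ.orderOf_pos.ne'
  have hPy : Polynomial.aeval y P = 0 := by simp [P, IntermediateField.algebraMap_apply]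
  have hint : IsIntegral E y := ⟨P, hP, hPy⟩
  have : FiniteDimensional E K := by
    have := IntermediateField.adjoin.finiteDimensional hint
    rw [htop] at this
    exact IntermediateField.topEquiv.toLinearEquiv.finiteDimensional
  have : Fintype (Subgroup.zpowers σ) := @Fintype.ofFinite _ hσ.finite_zpowers
  refine IntermediateField.eq_of_le_of_finrank_le' hE ?_
  calc Module.finrank E K = Module.finrank E E⟮y⟯ := by rw [htop, IntermediateField.finrank_top']
    _ = (minpoly E y).natDegree := IntermediateField.adjoin.finrank hint
    _ ≤ P.natDegree := Polynomial.natDegree_le_natDegree (minpoly.min E y hP hPy)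
    _ = orderOf σ := Polynomial.natDegree_X_pow_sub_C
    _ = Fintype.card (Subgroup.zpowers σ) := by
      rw [← Nat.card_eq_fintype_card, Nat.card_zpowers]
    _ = _ := (FixedPoints.finrank_eq_card (Subgroup.zpowers σ) K).symm

end Kummer

section Prime

theorem prime_X_pow_sub_C {R : Type*} [CommRing R] [IsDomain R] [UniqueFactorizationMonoid R]
    {p : ℕ} (hp : p.Prime) {r : R} (h : ∀ s : R, s ^ p ≠ r) :
    Prime (.X ^ p - .C r : R[X]) := by
  let K := FractionRing R
  have hr : ∀ s : K, s ^ p ≠ algebraMap R K r := by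
    rintro s hs
    obtain ⟨t, rfl⟩ := IsIntegrallyClosed.exists_algebraMap_eq_of_isIntegral_pow (R := R)
      hp.pos (hs ▸ isIntegral_algebraMap)
    exact h t (IsFractionRing.injective R K (by rw [map_pow, hs]))
  have hmonic := Polynomial.monic_X_pow_sub_C r hp.ne_zero
  refine Irreducible.prime <| (hmonic.irreducible_iff_irreducible_map_fraction_map (K := K)).2 ?_
  simpa using X_pow_sub_C_irreducible_of_prime hp hr

theorem pow_ne_of_not_dvd_natDegree {R : Type*} [CommSemiring R] [NoZeroDivisors R] {p : ℕ}
    {q : R[X]} (hq : ¬ p ∣ q.natDegree) (s : R[X]) : s ^ p ≠ q := by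
  rintro rfl
  exact hq ⟨_, Polynomial.natDegree_pow s p⟩

theorem pow_ne_neg_one_add_X_pow {k : Type*} [Field k] {p : ℕ} (hp : 1 < p) (hpk : (p : k) ≠ 0)
    (s : k[X]) : s ^ p ≠ -(1 + .X ^ p) := by
  intro hs
  have heq : (1 + .X ^ p : k[X]) = .X ^ p - .C (-1) := by simp [add_comm]
  have hsep := Polynomial.separable_X_pow_sub_C (-1 : k) hpk (by simp)
  have hunit : IsUnit s := hsep.squarefree s <| by
    rw [← heq, ← dvd_neg, ← hs, ← sq]
    exact pow_dvd_pow s hp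
  have hdeg := congrArg Polynomial.natDegree hs
  rw [Polynomial.natDegree_pow, Polynomial.natDegree_eq_zero_of_isUnit hunit,
    Polynomial.natDegree_neg, heq, Polynomial.natDegree_X_pow_sub_C] at hdeg
  lia

theorem comap_mapRingHom_span_map {R S : Type*} [CommRing R] [CommRing S] (φ : R →+* S)
    {P : R[X]} (hP : P.Monic) :
    (Ideal.span {P.map φ}).comap (Polynomial.mapRingHom φ) =
      Ideal.span {P} ⊔ (RingHom.ker φ).map Polynomial.C := by
  refine le_antisymm (fun Q hQ ↦ ?_) (sup_le ?_ ?_)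
  · have hrem : Q %ₘ P ∈ (RingHom.ker φ).map Polynomial.C := by
      rw [← Polynomial.ker_mapRingHom, RingHom.mem_ker, Polynomial.coe_mapRingHom,
        Polynomial.map_modByMonic φ hP, Polynomial.modByMonic_eq_zero_iff_dvd (hP.map φ)]
      simpa [Ideal.mem_span_singleton] using hQ
    rw [← Polynomial.modByMonic_add_div Q P, add_comm]
    exact Submodule.add_mem_sup (Ideal.mul_mem_right _ _ (Ideal.mem_span_singleton_self P)) hrem
  · simp [Ideal.span_le]
  · rw [← Polynomial.ker_mapRingHom]
    exact Ideal.ker_le_comap _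

theorem comap_span_image_equiv {R S F : Type*} [CommRing R] [CommRing S] [EquivLike F R S]
    [RingEquivClass F R S] (e : F) (s : Set R) :
    (Ideal.span (e '' s)).comap e = Ideal.span s := by
  rw [← Ideal.map_span]
  exact Ideal.comap_map_of_bijective e (EquivLike.bijective e)

end Prime

section SplitX

variable (k : Type*) [CommSemiring k] {n : ℕ} (i : Fin (n + 1))

/-- Polynomials in `n + 1` variables as polynomials in `X i` over the polynomials in the other
`n` variables. -/
def splitX : MvPolynomial (Fin (n + 1)) k ≃ₐ[k] (MvPolynomial (Fin n) k)[X] :=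
  (renameEquiv k (finSuccEquiv' i)).trans (optionEquivLeft k (Fin n))

@[simp]
theorem splitX_X_self : splitX k i (X i) = .X := by
  simp [splitX]

@[simp]
theorem splitX_X_succAbove (j : Fin n) : splitX k i (X (i.succAbove j)) = .C (X j) := by
  simp [splitX]

end SplitX

section AffineFunctionField

variable {ι k : Type*} [Field k]

/-- The coordinate ring of the affine variety cut out by the polynomials in `s`. -/
abbrev AffineCoordRing (s : Set (MvPolynomial ι k)) : Type _ :=
  MvPolynomial ι k ⧸ Ideal.span s

/-- The function field of the affine variety cut out by the polynomials in `s`; it is a field only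
when the coordinate ring is a domain. -/
abbrev AffineFunctionField (s : Set (MvPolynomial ι k)) : Type _ :=
  FractionRing (AffineCoordRing s)

/-- The rational function on the affine variety cut out by `s` given by a polynomial. -/
def ofPoly (s : Set (MvPolynomial ι k)) : MvPolynomial ι k →ₐ[k] AffineFunctionField s :=
  (IsScalarTower.toAlgHom k (AffineCoordRing s) _).comp (Ideal.Quotient.mkₐ k _)

variable {s : Set (MvPolynomial ι k)}

theorem ofPoly_eq_zero_iff {f : MvPolynomial ι k} : ofPoly s f = 0 ↔ f ∈ Ideal.span s := by
  rw [← Ideal.Quotient.eq_zero_iff_mem]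
  exact IsFractionRing.to_map_eq_zero_iff (R := AffineCoordRing s)

theorem ker_ofPoly (s : Set (MvPolynomial ι k)) : RingHom.ker (ofPoly s) = Ideal.span s :=
  Ideal.ext fun _ ↦ ofPoly_eq_zero_iff

namespace AffineFunctionField

variable {K : Type*} [Field K] [Algebra k K]

theorem algHom_ext {B : Type*} [CommSemiring B] [Algebra k B]
    {φ ψ : AffineFunctionField s →ₐ[k] B} (h : ∀ i, φ (ofPoly s (X i)) = ψ (ofPoly s (X i))) :
    φ = ψ := by
  refine IsLocalization.algHom_ext (nonZeroDivisors (AffineCoordRing s)) ?_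
  exact Ideal.Quotient.algHom_ext k (MvPolynomial.algHom_ext h)

theorem eq_top_of_forall_ofPoly_X_mem [IsDomain (AffineCoordRing s)]
    {E : IntermediateField k (AffineFunctionField s)} (h : ∀ i, ofPoly s (X i) ∈ E) : E = ⊤ := by
  have hpoly (f : MvPolynomial ι k) : ofPoly s f ∈ E := by
    induction f using MvPolynomial.induction_on with
    | C r => exact algebraMap_mem E r
    | add f g hf hg => simpa only [map_add] using add_mem hf hg
    | mul_X f i hf => simpa only [map_mul] using mul_mem hf (h i)
  refine eq_top_iff.2 fun z _ ↦ ?_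
  obtain ⟨a, b, -, rfl⟩ := IsFractionRing.div_surjective (AffineCoordRing s) z
  obtain ⟨f, rfl⟩ := Ideal.Quotient.mk_surjective a
  obtain ⟨g, rfl⟩ := Ideal.Quotient.mk_surjective b
  exact div_mem (hpoly f) (hpoly g)

/-- The embedding of the function field of an affine variety into `K` induced by a homomorphism from
polynomials whose kernel is the ideal of the variety. -/
def lift [IsDomain (AffineCoordRing s)] (φ : MvPolynomial ι k →ₐ[k] K)
    (hφ : ∀ f, φ f = 0 ↔ f ∈ Ideal.span s) : AffineFunctionField s →ₐ[k] K :=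
  IsFractionRing.liftAlgHom (g := Ideal.Quotient.liftₐ (Ideal.span s) φ fun f ↦ (hφ f).2) <|
    (Ideal.injective_lift_iff fun f ↦ (hφ f).2).2 (Ideal.ext hφ)

@[simp]
theorem lift_ofPoly [IsDomain (AffineCoordRing s)] (φ : MvPolynomial ι k →ₐ[k] K)
    (hφ : ∀ f, φ f = 0 ↔ f ∈ Ideal.span s) (f : MvPolynomial ι k) :
    lift φ hφ (ofPoly s f) = φ f :=
  IsFractionRing.lift_algebraMap ((Ideal.injective_lift_iff fun f ↦ (hφ f).2).2 (Ideal.ext hφ)) _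

end AffineFunctionField

/-- The automorphism of affine space multiplying the `i`-th coordinate by `u i`. -/
def scaleVars (u : ι → kˣ) : MvPolynomial ι k ≃ₐ[k] MvPolynomial ι k :=
  .ofAlgHom (aeval fun i ↦ (u i : k) • X i) (aeval fun i ↦ ((u i)⁻¹ : kˣ) • X i)
    (MvPolynomial.algHom_ext fun i ↦ by simp [smul_smul, Units.smul_def])
    (MvPolynomial.algHom_ext fun i ↦ by simp [smul_smul, Units.smul_def])

@[simp]
theorem scaleVars_X (u : ι → kˣ) (i : ι) : scaleVars u (X i) = (u i : k) • X i := by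
  simp [scaleVars]

/-- The automorphism of the function field multiplying the `i`-th coordinate by `u i`. -/
def diagAut (u : ι → kˣ) (hu : ∀ f ∈ s, scaleVars u f = f) :
    AffineFunctionField s ≃ₐ[k] AffineFunctionField s :=
  IsFractionRing.algEquivOfAlgEquiv <|
    Ideal.quotientEquivAlg (Ideal.span s) (Ideal.span s) (scaleVars u) <| Eq.symm <|
      (Ideal.map_span _ s).trans <| congrArg _ <| (Set.image_congr hu).trans <| Set.image_id s

@[simp]
theorem diagAut_ofPoly_X (u : ι → kˣ) (hu : ∀ f ∈ s, scaleVars u f = f) (i : ι) :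
    diagAut u hu (ofPoly s (X i)) = (u i : k) • ofPoly s (X i) := by
  rw [← map_smul, ← scaleVars_X]
  exact IsFractionRing.algEquivOfAlgEquiv_algebraMap _
    (Ideal.Quotient.mk (Ideal.span s) (X i))

theorem diagAut_comm {u v : ι → kˣ} (hu : ∀ f ∈ s, scaleVars u f = f)
    (hv : ∀ f ∈ s, scaleVars v f = f) (z : AffineFunctionField s) :
    diagAut u hu (diagAut v hv z) = diagAut v hv (diagAut u hu z) := by
  refine DFunLike.congr_fun (f := (diagAut u hu).toAlgHom.comp (diagAut v hv).toAlgHom)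
    (g := (diagAut v hv).toAlgHom.comp (diagAut u hu).toAlgHom) ?_ z
  exact AffineFunctionField.algHom_ext fun i ↦ by simp [smul_smul, mul_comm]

theorem diagAut_pow_ofPoly_X (u : ι → kˣ) (hu : ∀ f ∈ s, scaleVars u f = f) (n : ℕ) (i : ι) :
    (diagAut u hu ^ n) (ofPoly s (X i)) = (u i ^ n : k) • ofPoly s (X i) := by
  induction n with
  | zero => simp
  | succ n ih => simp [pow_succ, AlgEquiv.mul_apply, ih, smul_smul, mul_comm]

theorem orderOf_diagAut [IsDomain (AffineCoordRing s)] {u : ι → kˣ}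
    (hu : ∀ f ∈ s, scaleVars u f = f) {p : ℕ} [Fact p.Prime]
    (hup : u ^ p = 1) {i : ι} (hi : u i ≠ 1) (hX : ofPoly s (X i) ≠ 0) :
    orderOf (diagAut u hu) = p := by
  refine orderOf_eq_prime (AlgEquiv.ext fun z ↦ ?_) fun h ↦ hi (Units.ext ?_)
  · refine DFunLike.congr_fun (f := (diagAut u hu ^ p).toAlgHom) (g := .id k _) ?_ z
    refine AffineFunctionField.algHom_ext fun j ↦ ?_
    have huj : (u j : k) ^ p = 1 := congrArg Units.val (congrFun hup j)
    simp [diagAut_pow_ofPoly_X, huj]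
  · have hXi := diagAut_ofPoly_X u hu i
    rw [h, AlgEquiv.one_apply, Algebra.smul_def, eq_comm, mul_eq_right₀ hX] at hXi
    exact (algebraMap k (AffineFunctionField s)).injective (hXi.trans (map_one _).symm)

end AffineFunctionField

section Varieties

variable {k : Type*} [Field k] (p : ℕ) (q : k[X])

/-- Equations of the product of the curve `y ^ p = q(x)` and the affine Fermat curve
`1 + z₁ ^ p + z₂ ^ p = 0`, in the coordinates `(x, y, z₁, z₂)`. -/
def fermatProduct : Set (MvPolynomial (Fin 4) k) :=
  {X 1 ^ p - Polynomial.aeval (X 0) q, 1 + X 2 ^ p + X 3 ^ p}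

/-- Equation of the surface `y₁ ^ p + y₂ ^ p + q(x) = 0`, in the coordinates `(x, y₁, y₂)`. -/
def fermatQuotient : Set (MvPolynomial (Fin 3) k) :=
  {X 1 ^ p + X 2 ^ p + Polynomial.aeval (X 0) q}

variable {p q}

theorem splitX_aeval_X_succAbove {n : ℕ} (i : Fin (n + 1)) (j : Fin n) (q : k[X]) :
    splitX k i (Polynomial.aeval (X (i.succAbove j)) q) = .C (Polynomial.aeval (X j) q) := by
  rw [← Polynomial.aeval_algHom_apply, splitX_X_succAbove]
  exact Polynomial.aeval_algHom_apply Polynomial.CAlgHom (X j) q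

theorem splitX_one_fermatQuotient (p : ℕ) (q : k[X]) :
    splitX k (1 : Fin 3) (X 1 ^ p + X 2 ^ p + Polynomial.aeval (X 0) q) =
      .X ^ p - .C (-(X 1 ^ p + Polynomial.aeval (X 0) q)) := by
  have hX : splitX k 1 (X (2 : Fin 3)) = .C (X 1) := splitX_X_succAbove k 1 1
  have hq : splitX k 1 (Polynomial.aeval (X (0 : Fin 3)) q) = .C (Polynomial.aeval (X 0) q) :=
    splitX_aeval_X_succAbove 1 0 q
  simp only [map_add, map_neg, map_pow, splitX_X_self, hX, hq]
  ring

theorem prime_splitX_fermatQuotient (hp : p.Prime) (hq : ¬ p ∣ q.natDegree) :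
    Prime (.X ^ p - .C (-(X 1 ^ p + Polynomial.aeval (X 0) q)) : (MvPolynomial (Fin 2) k)[X]) := by
  refine prime_X_pow_sub_C hp fun s hs ↦ ?_
  refine pow_ne_of_not_dvd_natDegree (q := -q) (by simpa) (aeval ![.X, 0] s) ?_
  simpa [hp.ne_zero, ← Polynomial.aeval_algHom_apply] using
    congrArg (aeval (R := k) ![(.X : k[X]), 0]) hs

theorem isDomain_fermatQuotient (hp : p.Prime) (hq : ¬ p ∣ q.natDegree) :
    IsDomain (AffineCoordRing (fermatQuotient p q)) := by
  have hprime : Prime (X 1 ^ p + X 2 ^ p + Polynomial.aeval (X 0) q : MvPolynomial (Fin 3) k) := by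
    rw [← MulEquiv.prime_iff (splitX k 1), splitX_one_fermatQuotient]
    exact prime_splitX_fermatQuotient hp hq
  rw [Ideal.Quotient.isDomain_iff_prime]
  exact (Ideal.span_singleton_prime hprime.ne_zero).2 hprime

theorem ofPoly_fermatQuotient_ne_zero (hp : p ≠ 0) {f : MvPolynomial (Fin 3) k} (hf : f ≠ 0)
    (hdeg : (splitX k 1 f).natDegree < p) : ofPoly (fermatQuotient p q) f ≠ 0 := by
  rw [Ne, ofPoly_eq_zero_iff, fermatQuotient, Ideal.mem_span_singleton,
    ← map_dvd_iff (splitX k 1), splitX_one_fermatQuotient]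
  refine (Polynomial.monic_X_pow_sub_C _ hp).not_dvd_of_natDegree_lt (by simpa) ?_
  rwa [Polynomial.natDegree_X_pow_sub_C]

theorem ofPoly_aeval_fermatQuotient_ne_zero (hp : p ≠ 0) (hq : q ≠ 0) :
    ofPoly (fermatQuotient p q) (Polynomial.aeval (X 0) q) ≠ 0 := by
  refine ofPoly_fermatQuotient_ne_zero hp ?_ ?_
  · exact (map_ne_zero_iff _ (transcendental_iff_injective.1 (transcendental_X k 0))).2 hq
  · have hsplit : splitX k 1 (Polynomial.aeval (X (0 : Fin 3)) q) = .C (Polynomial.aeval (X 0) q) :=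
      splitX_aeval_X_succAbove 1 0 q
    simpa [hsplit] using Nat.pos_of_ne_zero hp

theorem ofPoly_X_one_fermatQuotient_ne_zero (hp : 1 < p) :
    ofPoly (fermatQuotient p q) (X 1) ≠ 0 :=
  ofPoly_fermatQuotient_ne_zero (by lia) (X_ne_zero _) (by simpa)

/-- Equation of the affine Fermat curve `1 + z₁ ^ p + z₂ ^ p = 0`. -/
def fermatCurve (k : Type*) [Field k] (p : ℕ) : Set (MvPolynomial (Fin 2) k) :=
  {1 + X 0 ^ p + X 1 ^ p}

theorem isDomain_fermatCurve (hp : p.Prime) (hpk : (p : k) ≠ 0) :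
    IsDomain (AffineCoordRing (fermatCurve k p)) := by
  have hprime : Prime (1 + X 0 ^ p + X 1 ^ p : MvPolynomial (Fin 2) k) := by
    have hX : splitX k 1 (X (0 : Fin 2)) = .C (X 0) := splitX_X_succAbove k 1 0
    have hsplit : splitX k (1 : Fin 2) (1 + X 0 ^ p + X 1 ^ p) = .X ^ p - .C (-(1 + X 0 ^ p)) := by
      simp only [map_add, map_neg, map_one, map_pow, splitX_X_self, hX]
      ring
    rw [← MulEquiv.prime_iff (splitX k 1), hsplit]
    refine prime_X_pow_sub_C hp fun s hs ↦ ?_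
    refine pow_ne_neg_one_add_X_pow hp.one_lt hpk (aeval ![.X] s) ?_
    simpa using congrArg (aeval (R := k) ![(.X : k[X])]) hs
  rw [Ideal.Quotient.isDomain_iff_prime]
  exact (Ideal.span_singleton_prime hprime.ne_zero).2 hprime

/-- The evaluation of polynomials in `(x, z₁, z₂)` at the generic point `(z₁, z₂)` of the Fermat
curve. -/
def evalFermat (k : Type*) [Field k] (p : ℕ) :
    MvPolynomial (Fin 3) k →ₐ[k] (AffineFunctionField (fermatCurve k p))[X] :=
  (Polynomial.mapAlgHom (ofPoly (fermatCurve k p))).comp (splitX k 0).toAlgHom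

theorem ker_evalFermat : RingHom.ker (evalFermat k p) = Ideal.span {1 + X 1 ^ p + X 2 ^ p} := by
  have h1 : splitX k 0 (X (1 : Fin 3)) = .C (X 0) := splitX_X_succAbove k 0 0
  have h2 : splitX k 0 (X (2 : Fin 3)) = .C (X 1) := splitX_X_succAbove k 0 1
  have hker : RingHom.ker (Polynomial.mapAlgHom (ofPoly (fermatCurve k p))) =
      Ideal.span (splitX k 0 '' {1 + X 1 ^ p + X 2 ^ p}) := by
    refine (Polynomial.ker_mapRingHom _).trans ?_
    rw [AlgHom.toRingHom_eq_coe, RingHom.ker_coe_toRingHom, ker_ofPoly, Ideal.map_span]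
    simp [fermatCurve, h1, h2]
  rw [← comap_span_image_equiv (splitX k 0) {1 + X 1 ^ p + X 2 ^ p}, ← hker]
  rfl

theorem evalFermat_aeval_X_zero (q : k[X]) :
    evalFermat k p (Polynomial.aeval (X 0) q) = q.map (algebraMap k _) := by
  have hX : evalFermat k p (X 0) = .X := by simp [evalFermat]
  rw [← Polynomial.aeval_algHom_apply, hX, Polynomial.aeval_X_left_eq_map]

theorem splitX_one_image_fermatProduct (p : ℕ) (q : k[X]) :
    splitX k 1 '' fermatProduct p q =
      {.X ^ p - .C (Polynomial.aeval (X 0) q), .C (1 + X 1 ^ p + X 2 ^ p)} := by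
  have h2 : splitX k 1 (X (2 : Fin 4)) = .C (X 1) := splitX_X_succAbove k 1 1
  have h3 : splitX k 1 (X (3 : Fin 4)) = .C (X 2) := splitX_X_succAbove k 1 2
  have hq : splitX k 1 (Polynomial.aeval (X (0 : Fin 4)) q) = .C (Polynomial.aeval (X 0) q) :=
    splitX_aeval_X_succAbove 1 0 q
  simp [fermatProduct, Set.image_pair, h2, h3, hq]

theorem isDomain_fermatProduct (hp : p.Prime) (hpk : (p : k) ≠ 0) (hq : ¬ p ∣ q.natDegree) :
    IsDomain (AffineCoordRing (fermatProduct p q)) := by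
  have := isDomain_fermatCurve hp hpk
  let P : (MvPolynomial (Fin 3) k)[X] := .X ^ p - .C (Polynomial.aeval (X 0) q)
  have hP : P.Monic := Polynomial.monic_X_pow_sub_C _ hp.ne_zero
  have hprime : Prime (P.map (evalFermat k p).toRingHom) := by
    have hPmap : P.map (evalFermat k p).toRingHom = .X ^ p - .C (q.map (algebraMap k _)) := by
      simp [P, evalFermat_aeval_X_zero]
    rw [hPmap]
    exact prime_X_pow_sub_C hp (pow_ne_of_not_dvd_natDegree (by simpa))
  have hspan : Ideal.span (splitX k 1 '' fermatProduct p q) =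
      (Ideal.span {P.map (evalFermat k p).toRingHom}).comap
        (Polynomial.mapRingHom (evalFermat k p).toRingHom) := by
    rw [comap_mapRingHom_span_map _ hP, AlgHom.toRingHom_eq_coe, RingHom.ker_coe_toRingHom,
      ker_evalFermat, splitX_one_image_fermatProduct, Ideal.span_insert, Ideal.map_span,
      Set.image_singleton]
  have := (Ideal.span_singleton_prime hprime.ne_zero).2 hprime
  rw [Ideal.Quotient.isDomain_iff_prime, ← comap_span_image_equiv (splitX k 1), hspan]
  infer_instance

end Varieties

section Quotient

variable {k : Type*} [Field k] {p : ℕ} {q : k[X]}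

theorem ofPoly_X_one_pow_fermatProduct (p : ℕ) (q : k[X]) :
    ofPoly (fermatProduct p q) (X 1) ^ p =
      ofPoly (fermatProduct p q) (Polynomial.aeval (X 0) q) := by
  rw [← sub_eq_zero, ← map_pow, ← map_sub, ofPoly_eq_zero_iff]
  exact Ideal.subset_span (by simp [fermatProduct])

variable (k) in
/-- The comorphism `x ↦ x`, `y₁ ↦ z₁ y`, `y₂ ↦ z₂ y` of the quotient map from the product of curves
to the surface. -/
def quotientHom : MvPolynomial (Fin 3) k →ₐ[k] MvPolynomial (Fin 4) k :=
  aeval ![X 0, X 2 * X 1, X 3 * X 1]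

@[simp]
theorem quotientHom_X (i : Fin 3) :
    quotientHom k (X i) = (![X 0, X 2 * X 1, X 3 * X 1] : Fin 3 → MvPolynomial (Fin 4) k) i :=
  aeval_X _ i

theorem quotientHom_aeval_X_zero (q : k[X]) :
    quotientHom k (Polynomial.aeval (X 0) q) = Polynomial.aeval (X 0) q := by
  rw [← Polynomial.aeval_algHom_apply]
  simp

-- Choose `y` with `y ^ p = q(x)` and put `zᵢ = yᵢ / y`.
theorem exists_comp_quotientHom_eq {Ω : Type*} [Field Ω] [IsAlgClosed Ω] [Algebra k Ω]
    (hp : p ≠ 0) {η : MvPolynomial (Fin 3) k →ₐ[k] Ω} (hη : ∀ f ∈ fermatQuotient p q, η f = 0)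
    (hq : η (Polynomial.aeval (X 0) q) ≠ 0) :
    ∃ ξ : MvPolynomial (Fin 4) k →ₐ[k] Ω,
      (∀ f ∈ fermatProduct p q, ξ f = 0) ∧ ξ.comp (quotientHom k) = η := by
  obtain ⟨y, hy⟩ := IsAlgClosed.exists_pow_nat_eq (η (Polynomial.aeval (X 0) q)) hp.bot_lt
  have hy0 : y ≠ 0 := by
    rintro rfl
    exact hq (by rw [← hy, zero_pow hp])
  have hw : η (X 1) ^ p + η (X 2) ^ p + y ^ p = 0 := by
    simpa only [hy, map_add, map_pow] using hη _ rfl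
  refine ⟨aeval ![η (X 0), y, η (X 1) / y, η (X 2) / y], ?_, MvPolynomial.algHom_ext fun i ↦ ?_⟩
  · rintro f (rfl | rfl)
    · simp [← Polynomial.aeval_algHom_apply, hy]
    · simp only [map_add, map_one, map_pow, aeval_X, Matrix.cons_val, div_pow]
      field_simp
      linear_combination hw
  · fin_cases i <;> simp [hy0]

theorem quotientHom_mem_span_iff [IsDomain (AffineCoordRing (fermatQuotient p q))] (hp : p ≠ 0)
    (hq : q ≠ 0) {f : MvPolynomial (Fin 3) k} :
    quotientHom k f ∈ Ideal.span (fermatProduct p q) ↔ f ∈ Ideal.span (fermatQuotient p q) := by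
  let F := AffineFunctionField (fermatQuotient p q)
  let η : MvPolynomial (Fin 3) k →ₐ[k] AlgebraicClosure F :=
    (IsScalarTower.toAlgHom k F _).comp (ofPoly (fermatQuotient p q))
  have hη (g) : η g = 0 ↔ g ∈ Ideal.span (fermatQuotient p q) :=
    (map_eq_zero (algebraMap F (AlgebraicClosure F))).trans ofPoly_eq_zero_iff
  constructor
  · intro hf
    obtain ⟨ξ, hξ, hξη⟩ := exists_comp_quotientHom_eq hp
      (fun g hg ↦ (hη g).2 (Ideal.subset_span hg))
      fun h ↦ ofPoly_aeval_fermatQuotient_ne_zero hp hq (ofPoly_eq_zero_iff.2 ((hη _).1 h))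
    have hle : Ideal.span (fermatProduct p q) ≤ RingHom.ker ξ := Ideal.span_le.2 hξ
    exact (hη f).1 (hξη ▸ hle hf)
  · suffices h : Ideal.span (fermatQuotient p q) ≤
        (Ideal.span (fermatProduct p q)).comap (quotientHom k) from fun hf ↦ h hf
    rw [fermatQuotient, Ideal.span_singleton_le_iff_mem, Ideal.mem_comap, fermatProduct,
      Ideal.mem_span_pair]
    refine ⟨-1, X 1 ^ p, ?_⟩
    simp only [map_add, map_pow, quotientHom_X, quotientHom_aeval_X_zero, Matrix.cons_val]
    ring

variable [IsDomain (AffineCoordRing (fermatProduct p q))]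
  [IsDomain (AffineCoordRing (fermatQuotient p q))] [NeZero p]

variable (p) in
/-- The embedding of function fields induced by `quotientHom`. -/
def pullback (hq : q ≠ 0) :
    AffineFunctionField (fermatQuotient p q) →ₐ[k] AffineFunctionField (fermatProduct p q) :=
  AffineFunctionField.lift ((ofPoly _).comp (quotientHom k)) fun _ ↦
    ofPoly_eq_zero_iff.trans (quotientHom_mem_span_iff (NeZero.ne p) hq)

@[simp]
theorem pullback_ofPoly (hq : q ≠ 0) (f : MvPolynomial (Fin 3) k) :
    pullback p hq (ofPoly _ f) = ofPoly _ (quotientHom k f) :=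
  AffineFunctionField.lift_ofPoly _ _ f

theorem ofPoly_X_one_fermatProduct_ne_zero (hq : q ≠ 0) :
    ofPoly (fermatProduct p q) (X 1) ≠ 0 := by
  rw [← pow_ne_zero_iff (NeZero.ne p), ofPoly_X_one_pow_fermatProduct, ← quotientHom_aeval_X_zero,
    ← pullback_ofPoly hq]
  exact (map_ne_zero_iff _ (pullback p hq).injective).2 <|
    ofPoly_aeval_fermatQuotient_ne_zero (NeZero.ne p) hq

theorem fieldRange_pullback_adjoin (hq : q ≠ 0) :
    (pullback p hq).fieldRange⟮ofPoly (fermatProduct p q) (X 1)⟯ = ⊤ := by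
  set y := ofPoly (fermatProduct p q) (X 1)
  let E := (pullback p hq).fieldRange⟮y⟯
  have hyE : y ∈ E := IntermediateField.mem_adjoin_simple_self _ y
  have hE (f) : ofPoly _ (quotientHom k f) ∈ E :=
    E.algebraMap_mem ⟨_, ofPoly _ f, pullback_ofPoly hq f⟩
  have hdiv (i) (h : ofPoly (fermatProduct p q) (X i * X 1) ∈ E) : ofPoly _ (X i) ∈ E := by
    rw [map_mul] at h
    simpa [ofPoly_X_one_fermatProduct_ne_zero hq, y] using div_mem h hyE
  refine (IntermediateField.restrictScalars_eq_top_iff (K := k)).1 <|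
    AffineFunctionField.eq_top_of_forall_ofPoly_X_mem fun i ↦ ?_
  fin_cases i
  · simpa using hE (X 0)
  · exact hyE
  · exact hdiv 2 (by simpa using hE (X 1))
  · exact hdiv 3 (by simpa using hE (X 2))

end Quotient

section Automorphisms

variable {k : Type*} [Field k] {p : ℕ}

/-- The automorphism `(x, y, z₁, z₂) ↦ (x, αy, βz₁, βz₂)` of the function field of the product of
curves. -/
def productAut (q : k[X]) (α β : rootsOfUnity p k) :
    AffineFunctionField (fermatProduct p q) ≃ₐ[k] AffineFunctionField (fermatProduct p q) :=
  diagAut ![1, α, β, β] <| by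
    have hα : ((α : kˣ) : k) ^ p = 1 := congrArg Units.val α.2
    have hβ : ((β : kˣ) : k) ^ p = 1 := congrArg Units.val β.2
    rintro f (rfl | rfl) <;> simp [← Polynomial.aeval_algHom_apply, smul_pow, hα, hβ]

/-- The automorphism `(x, y₁, y₂) ↦ (x, αy₁, αy₂)` of the function field of the surface. -/
def quotientAut (q : k[X]) (α : rootsOfUnity p k) :
    AffineFunctionField (fermatQuotient p q) ≃ₐ[k] AffineFunctionField (fermatQuotient p q) :=
  diagAut ![1, α, α] <| by
    have hα : ((α : kˣ) : k) ^ p = 1 := congrArg Units.val α.2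
    rintro f rfl
    simp [← Polynomial.aeval_algHom_apply, smul_pow, hα]

variable {q : k[X]}

@[simp]
theorem productAut_ofPoly_X (α β : rootsOfUnity p k) (i : Fin 4) :
    productAut q α β (ofPoly _ (X i)) = ((![1, α, β, β] : Fin 4 → kˣ) i : k) • ofPoly _ (X i) :=
  diagAut_ofPoly_X _ _ i

@[simp]
theorem quotientAut_ofPoly_X (α : rootsOfUnity p k) (i : Fin 3) :
    quotientAut q α (ofPoly _ (X i)) = ((![1, α, α] : Fin 3 → kˣ) i : k) • ofPoly _ (X i) :=
  diagAut_ofPoly_X _ _ i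

@[simp]
theorem quotientAut_one_apply (z : AffineFunctionField (fermatQuotient p q)) :
    quotientAut q 1 z = z := by
  refine DFunLike.congr_fun (f := (quotientAut q 1).toAlgHom) (g := .id k _) ?_ z
  refine AffineFunctionField.algHom_ext fun i ↦ ?_
  fin_cases i <;> simp

variable [IsDomain (AffineCoordRing (fermatQuotient p q))] [Fact p.Prime]

theorem orderOf_quotientAut {α : rootsOfUnity p k} (hα : α ≠ 1) :
    orderOf (quotientAut q α) = p := by
  have hp : 1 < p := (Fact.out : p.Prime).one_lt
  refine orderOf_diagAut _ (funext fun i ↦ ?_) (i := 1) (by simpa)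
    (ofPoly_X_one_fermatQuotient_ne_zero hp)
  fin_cases i
  exacts [one_pow p, α.2, α.2]

variable [IsDomain (AffineCoordRing (fermatProduct p q))]

theorem orderOf_productAut (hq : q ≠ 0) {α : rootsOfUnity p k} (hα : α ≠ 1)
    (β : rootsOfUnity p k) :
    orderOf (productAut q α β) = p := by
  refine orderOf_diagAut _ (funext fun i ↦ ?_) (i := 1) (by simpa)
    (ofPoly_X_one_fermatProduct_ne_zero hq)
  fin_cases i
  exacts [one_pow p, α.2, β.2, β.2]

theorem pullback_quotientAut (hq : q ≠ 0) (α β : rootsOfUnity p k) (z) :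
    pullback p hq (quotientAut q (α * β) z) = productAut q α β (pullback p hq z) := by
  refine DFunLike.congr_fun (f := (pullback p hq).comp (quotientAut q (α * β)).toAlgHom)
    (g := (productAut q α β).toAlgHom.comp (pullback p hq)) ?_ z
  refine AffineFunctionField.algHom_ext fun i ↦ ?_
  fin_cases i <;> simp [smul_smul, mul_comm]

theorem fieldRange_pullback (hq : q ≠ 0) {α : rootsOfUnity p k} (hα : α ≠ 1) :
    (pullback p hq).fieldRange =
      IntermediateField.fixedField (Subgroup.zpowers (productAut q α α⁻¹)) := by
  have horder := orderOf_productAut hq hα α⁻¹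
  refine eq_fixedField_zpowers_of_adjoin_simple_eq_top
    (orderOf_pos_iff.1 (horder.symm ▸ NeZero.pos p)) ?_ ?_ (fieldRange_pullback_adjoin hq)
  · rintro _ ⟨z, rfl⟩
    refine mem_fixedField_zpowers.2 ?_
    simpa using (pullback_quotientAut hq α α⁻¹ z).symm
  · rw [horder, ofPoly_X_one_pow_fermatProduct, ← quotientHom_aeval_X_zero]
    exact ⟨_, pullback_ofPoly hq _⟩

/-- The isomorphism of the function field of the surface with the field of invariants of
`productAut q α α⁻¹`. -/
def equivFixed (hq : q ≠ 0) {α : rootsOfUnity p k} (hα : α ≠ 1) :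
    AffineFunctionField (fermatQuotient p q) ≃ₐ[k]
      AlgHom.equalizer (productAut q α α⁻¹).toAlgHom (AlgHom.id k _) :=
  (AlgEquiv.ofInjective (pullback p hq) (pullback p hq).injective).trans <|
    Subalgebra.equivOfEq _ _ <| by
      ext z
      have := SetLike.ext_iff.1 (fieldRange_pullback hq hα) z
      exact this.trans mem_fixedField_zpowers

theorem coe_equivFixed (hq : q ≠ 0) {α : rootsOfUnity p k} (hα : α ≠ 1) (z) :
    (equivFixed hq hα z : AffineFunctionField (fermatProduct p q)) = pullback p hq z :=
  rfl

end Automorphisms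

theorem stmt8_general {k : Type*} [Field k] {p : ℕ} [Fact p.Prime] {ζ : k}
    (hζ : IsPrimitiveRoot ζ p) {q : k[X]} (hq : ¬ p ∣ q.natDegree) :
    ∃ σ ρ : AffineFunctionField (fermatProduct p q) ≃ₐ[k] AffineFunctionField (fermatProduct p q),
      orderOf σ = p ∧
      σ (ofPoly _ (X 1)) = ζ • ofPoly _ (X 1) ∧
      σ (ofPoly _ (X 2)) = ζ ^ (p - 1) • ofPoly _ (X 2) ∧
      σ (ofPoly _ (X 3)) = ζ ^ (p - 1) • ofPoly _ (X 3) ∧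
      σ (ofPoly _ (X 0)) = ofPoly _ (X 0) ∧
      orderOf ρ = p ∧
      ρ (ofPoly _ (X 1)) = ζ • ofPoly _ (X 1) ∧
      ρ (ofPoly _ (X 0)) = ofPoly _ (X 0) ∧
      ρ (ofPoly _ (X 2)) = ofPoly _ (X 2) ∧
      ρ (ofPoly _ (X 3)) = ofPoly _ (X 3) ∧
      (∀ z, σ z = z → σ (ρ z) = ρ z) ∧
      ∃ (σW : AffineFunctionField (fermatQuotient p q) ≃ₐ[k]
            AffineFunctionField (fermatQuotient p q))
        (φ : AffineFunctionField (fermatQuotient p q) ≃ₐ[k]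
            AlgHom.equalizer σ.toAlgHom (AlgHom.id k _)),
        orderOf σW = p ∧
        σW (ofPoly _ (X 1)) = ζ • ofPoly _ (X 1) ∧
        σW (ofPoly _ (X 2)) = ζ • ofPoly _ (X 2) ∧
        σW (ofPoly _ (X 0)) = ofPoly _ (X 0) ∧
        φ (ofPoly _ (X 1)) = ofPoly (fermatProduct p q) (X 2 * X 1) ∧
        φ (ofPoly _ (X 2)) = ofPoly (fermatProduct p q) (X 3 * X 1) ∧
        φ (ofPoly _ (X 0)) = ofPoly (fermatProduct p q) (X 0) ∧
        ∀ s, (φ (σW s) : AffineFunctionField (fermatProduct p q)) = ρ (φ s) := by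
  have hp : p.Prime := Fact.out
  have hpk : (p : k) ≠ 0 := hζ.neZero'.out
  have := isDomain_fermatProduct hp hpk hq
  have := isDomain_fermatQuotient hp hq
  have hq0 : q ≠ 0 := fun h ↦ hq (by simp [h])
  let α : rootsOfUnity p k := hζ.toRootsOfUnity
  have hα : α ≠ 1 := fun h ↦ hζ.ne_one hp.one_lt <|
    congrArg (fun β : rootsOfUnity p k ↦ ((β : kˣ) : k)) h
  have hαζ : ((α : kˣ) : k) = ζ := rfl
  have hinv : ζ⁻¹ = ζ ^ (p - 1) :=
    inv_eq_of_mul_eq_one_right (by rw [mul_pow_sub_one hp.ne_zero, hζ.pow_eq_one])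
  refine ⟨productAut q α α⁻¹, productAut q α 1, orderOf_productAut hq0 hα _, ?_, ?_, ?_, ?_,
    orderOf_productAut hq0 hα _, ?_, ?_, ?_, ?_,
    fun z hz ↦ (diagAut_comm _ _ z).trans (congrArg (productAut q α 1) hz),
    quotientAut q α, equivFixed hq0 hα, orderOf_quotientAut hα, ?_, ?_, ?_, ?_, ?_, ?_,
    fun s ↦ by simpa [coe_equivFixed] using pullback_quotientAut hq0 α 1 s⟩
  all_goals simp [coe_equivFixed, hαζ, hinv]

/-- The quintic `x(x - 1)(x - a)(x - b)(x - c)` defining the triple cover `C` of the line. -/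
def branchQuintic (a b c : ℂ) : ℂ[X] :=
  .X * (.X - 1) * (.X - .C a) * (.X - .C b) * (.X - .C c)

theorem natDegree_branchQuintic (a b c : ℂ) : (branchQuintic a b c).natDegree = 5 := by
  unfold branchQuintic
  compute_degree!

theorem fermatProduct_branchQuintic (a b c : ℂ) :
    fermatProduct 3 (branchQuintic a b c) = {pC a b c, pF₀4} := by
  simp [fermatProduct, branchQuintic, pC, q4, pF₀4, algebraMap_eq]

theorem fermatQuotient_branchQuintic (a b c : ℂ) :
    fermatQuotient 3 (branchQuintic a b c) = {pW₀ a b c} := by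
  simp [fermatQuotient, branchQuintic, pW₀, q3, algebraMap_eq]

theorem isPrimitiveRoot_ω : IsPrimitiveRoot ω 3 := by
  simpa [ω] using Complex.isPrimitiveRoot_exp 3 three_ne_zero

/-- Let `a, b, c ∈ ℂ ∖ {0,1}` be pairwise distinct and let
`K = Frac(ℂ[x,y,z₁,z₂]/(y³ − x(x−1)(x−a)(x−b)(x−c), 1 + z₁³ + z₂³))` be the function
field of `C × F₀`.  Let `σ` be the order-3 automorphism of `K` with `σ(y) = ω·y`,
`σ(z₁) = ω²·z₁`, `σ(z₂) = ω²·z₂` (fixing `x`) — the diagonal `G = ℤ/3ℤ` action — and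
let `ρ` be the order-3 automorphism of `K` with `ρ(y) = ω·y` (fixing `x, z₁, z₂`);
`ρ` preserves the fixed field `L = K^σ`.  Then there is a `ℂ`-algebra isomorphism `φ`
from the function field of `W₀` onto `L` intertwining the order-3 automorphism
`(y₁, y₂) ↦ (ω·y₁, ω·y₂)` of `Frac(W₀)` with the restriction of `ρ` to `L`; an
isomorphism is induced by `y₁ ↦ z₁·y`, `y₂ ↦ z₂·y`, with `x` unchanged.  In other
words, `W` is `G`-birationally equivalent to the quotient `(C × F)/G`. -/
theorem stmt8 (a b c : ℂ) (ha0 : a ≠ 0) (ha1 : a ≠ 1) (hb0 : b ≠ 0) (hb1 : b ≠ 1)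
    (hc0 : c ≠ 0) (hc1 : c ≠ 1) (hab : a ≠ b) (hac : a ≠ c) (hbc : b ≠ c) :
    ∃ (σ ρ : FractionRing (HSurf2 (pC a b c) pF₀4) ≃ₐ[ℂ] FractionRing (HSurf2 (pC a b c) pF₀4)),
      orderOf σ = 3 ∧
      σ (cls2 (pC a b c) pF₀4 (X 1)) = (ω : ℂ) • cls2 (pC a b c) pF₀4 (X 1) ∧
      σ (cls2 (pC a b c) pF₀4 (X 2)) = (ω ^ 2 : ℂ) • cls2 (pC a b c) pF₀4 (X 2) ∧
      σ (cls2 (pC a b c) pF₀4 (X 3)) = (ω ^ 2 : ℂ) • cls2 (pC a b c) pF₀4 (X 3) ∧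
      σ (cls2 (pC a b c) pF₀4 (X 0)) = cls2 (pC a b c) pF₀4 (X 0) ∧
      orderOf ρ = 3 ∧
      ρ (cls2 (pC a b c) pF₀4 (X 1)) = (ω : ℂ) • cls2 (pC a b c) pF₀4 (X 1) ∧
      ρ (cls2 (pC a b c) pF₀4 (X 0)) = cls2 (pC a b c) pF₀4 (X 0) ∧
      ρ (cls2 (pC a b c) pF₀4 (X 2)) = cls2 (pC a b c) pF₀4 (X 2) ∧
      ρ (cls2 (pC a b c) pF₀4 (X 3)) = cls2 (pC a b c) pF₀4 (X 3) ∧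
      (∀ k, σ k = k → σ (ρ k) = ρ k) ∧
      ∃ (σW : FractionRing (HSurf (pW₀ a b c)) ≃ₐ[ℂ] FractionRing (HSurf (pW₀ a b c)))
        (φ : FractionRing (HSurf (pW₀ a b c)) ≃ₐ[ℂ]
          (AlgHom.equalizer σ.toAlgHom (AlgHom.id ℂ (FractionRing (HSurf2 (pC a b c) pF₀4))))),
        orderOf σW = 3 ∧
        σW (cls (pW₀ a b c) (X 1)) = (ω : ℂ) • cls (pW₀ a b c) (X 1) ∧
        σW (cls (pW₀ a b c) (X 2)) = (ω : ℂ) • cls (pW₀ a b c) (X 2) ∧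
        σW (cls (pW₀ a b c) (X 0)) = cls (pW₀ a b c) (X 0) ∧
        (↑(φ (cls (pW₀ a b c) (X 1))) : FractionRing (HSurf2 (pC a b c) pF₀4))
          = cls2 (pC a b c) pF₀4 (X 2 * X 1) ∧
        (↑(φ (cls (pW₀ a b c) (X 2))) : FractionRing (HSurf2 (pC a b c) pF₀4))
          = cls2 (pC a b c) pF₀4 (X 3 * X 1) ∧
        (↑(φ (cls (pW₀ a b c) (X 0))) : FractionRing (HSurf2 (pC a b c) pF₀4))
          = cls2 (pC a b c) pF₀4 (X 0) ∧
        ∀ s, (↑(φ (σW s)) : FractionRing (HSurf2 (pC a b c) pF₀4)) = ρ ↑(φ s) := by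
  have : Fact (Nat.Prime 3) := Nat.fact_prime_three
  have h := stmt8_general isPrimitiveRoot_ω (q := branchQuintic a b c)
    (by rw [natDegree_branchQuintic]; decide)
  rw [fermatProduct_branchQuintic, fermatQuotient_branchQuintic] at h
  exact h
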